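/- Chebyshev systems generate convex bodies (Section 7): Let I = [a, b] ⊂ ℝ be a compact interval with a < b, and let Φ : I → ℝ^m be continuous such that for every choice of m distinct points t_1, …, t_m ∈ I the vectors Φ(t_1), …, Φ(t_m) are linearly independent in ℝ^m (i.e., Φ is a Chebyshev system). Then the convex hull of {0} ∪ { Φ(t) : t ∈ I } is a convex body: a compact convex subset of ℝ^m with nonempty interior. -/

import Mathlib

noncomputable section

/-!
By Carathéodory's theorem, the convex hull of `s` in a space of dimension `d` is the image of
`stdSimplex × s ^ (d + 1)` under `(w, z) ↦ ∑ i, w i • z i`, so it is compact whenever `s` is.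

The convex hull of `{0} ∪ s` has nonempty interior as soon as `s` spans the space linearly, and the
values of a Chebyshev system at any `d` distinct points already form a basis.
-/

section Caratheodory

variable {𝕜 E : Type*} [Field 𝕜] [LinearOrder 𝕜] [IsStrictOrderedRing 𝕜] [AddCommGroup E]
  [Module 𝕜 E]

theorem convexHull_range_eq_image_stdSimplex {ι : Type*} [Fintype ι] (z : ι → E) :
    convexHull 𝕜 (Set.range z) = (fun w : ι → 𝕜 => ∑ i, w i • z i) '' stdSimplex 𝕜 ι := by
  classical
  change _ = Fintype.linearCombination 𝕜 z '' stdSimplex 𝕜 ι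
  rw [← convexHull_rangle_single_eq_stdSimplex, LinearMap.image_convexHull, ← Set.range_comp]
  congr 2 with i
  simp

theorem exists_range_eq_of_card_le {α : Type*} {t : Finset α} (ht : t.Nonempty)
    {n : ℕ} (hcard : t.card ≤ n) : ∃ z : Fin n → α, Set.range z = t := by
  have := ht.to_subtype
  obtain ⟨e⟩ : Nonempty (t ↪ Fin n) := Function.Embedding.nonempty_of_card_le (by simpa)
  refine ⟨(↑) ∘ Function.invFun e, ?_⟩
  rw [(Function.invFun_surjective e.injective).range_comp]
  exact Subtype.range_coe

theorem convexHull_eq_biUnion_range [FiniteDimensional 𝕜 E] (s : Set E) :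
    convexHull 𝕜 s = ⋃ z ∈ Set.univ.pi fun _ : Fin (Module.finrank 𝕜 E + 1) => s,
      convexHull 𝕜 (Set.range z) := by
  refine Set.Subset.antisymm (fun x hx => ?_) ?_
  · rw [convexHull_eq_union] at hx
    simp only [Set.mem_iUnion] at hx
    obtain ⟨t, hts, hindep, hxt⟩ := hx
    have ht : t.Nonempty := Finset.coe_nonempty.mp (convexHull_nonempty_iff.mp ⟨x, hxt⟩)
    have hcard : t.card ≤ Module.finrank 𝕜 E + 1 := by
      simpa using hindep.card_le_finrank_succ.trans (Nat.succ_le_succ (Submodule.finrank_le _))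
    obtain ⟨z, hz⟩ := exists_range_eq_of_card_le ht hcard
    exact Set.mem_biUnion (fun i _ => hts (hz ▸ Set.mem_range_self i)) (hz ▸ hxt)
  · exact Set.iUnion₂_subset fun z hz =>
      convexHull_mono (Set.range_subset_iff.mpr fun i => hz i trivial)

theorem convexHull_eq_image_stdSimplex_prod_pi [FiniteDimensional 𝕜 E] (s : Set E) :
    convexHull 𝕜 s =
      (fun q : (Fin (Module.finrank 𝕜 E + 1) → 𝕜) × (Fin (Module.finrank 𝕜 E + 1) → E) =>
        ∑ i, q.1 i • q.2 i) '' (stdSimplex 𝕜 _ ×ˢ Set.univ.pi fun _ => s) := by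
  ext x
  rw [convexHull_eq_biUnion_range]
  simp only [convexHull_range_eq_image_stdSimplex, Set.mem_iUnion, Set.mem_image, Set.mem_prod,
    Prod.exists]
  grind

variable (𝕜) in
theorem isCompact_convexHull [TopologicalSpace 𝕜] [OrderClosedTopology 𝕜] [CompactIccSpace 𝕜]
    [ContinuousAdd 𝕜] [TopologicalSpace E] [ContinuousAdd E] [ContinuousSMul 𝕜 E]
    [FiniteDimensional 𝕜 E] {s : Set E} (hs : IsCompact s) : IsCompact (convexHull 𝕜 s) := by
  rw [convexHull_eq_image_stdSimplex_prod_pi]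
  exact ((isCompact_stdSimplex 𝕜 _).prod (isCompact_univ_pi fun _ => hs)).image (by fun_prop)

end Caratheodory

theorem interior_convexHull_insert_zero_nonempty_iff {E : Type*} [NormedAddCommGroup E]
    [NormedSpace ℝ E] [FiniteDimensional ℝ E] {s : Set E} :
    (interior (convexHull ℝ (insert 0 s))).Nonempty ↔ Submodule.span ℝ s = ⊤ := by
  rw [interior_convexHull_nonempty_iff_affineSpan_eq_top, ← SetLike.coe_set_eq,
    affineSpan_insert_zero, AffineSubspace.top_coe, Submodule.coe_eq_univ]

theorem exists_injective_of_le_encard {α : Type*} {s : Set α} {n : ℕ} (hn : n ≤ s.encard) :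
    ∃ f : Fin n → α, Function.Injective f ∧ ∀ i, f i ∈ s := by
  obtain ⟨t, hts, ht⟩ := Set.exists_subset_encard_eq hn
  have := (Set.finite_of_encard_eq_coe ht).to_subtype
  have hcard : Nat.card t = n := by
    rw [Nat.card_coe_set_eq, Set.ncard, ht, ENat.toNat_natCast]
  let e : Fin n ≃ t := (Finite.equivFinOfCardEq hcard).symm
  exact ⟨(↑) ∘ e, Subtype.val_injective.comp e.injective, fun i => hts (e i).2⟩

/-- The linear independence condition for `Φ` to be a Chebyshev system on `K`: the values of `Φ` at
any `dim E` distinct points of `K` are linearly independent. Continuity of `Φ`, which is usually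
part of the notion, is assumed separately. -/
def IsChebyshevSystem (𝕜 : Type*) {X E : Type*} [DivisionRing 𝕜] [AddCommGroup E] [Module 𝕜 E]
    (Φ : X → E) (K : Set X) : Prop :=
  ∀ ts : Fin (Module.finrank 𝕜 E) → X, (∀ i, ts i ∈ K) → Function.Injective ts →
    LinearIndependent 𝕜 fun i => Φ (ts i)

theorem IsChebyshevSystem.span_image_eq_top {𝕜 X E : Type*} [DivisionRing 𝕜] [AddCommGroup E]
    [Module 𝕜 E] [FiniteDimensional 𝕜 E] {Φ : X → E} {K : Set X} (hΦ : IsChebyshevSystem 𝕜 Φ K)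
    (hK : Module.finrank 𝕜 E ≤ K.encard) : Submodule.span 𝕜 (Φ '' K) = ⊤ := by
  obtain ⟨ts, hinj, hmem⟩ := exists_injective_of_le_encard hK
  have hspan : Submodule.span 𝕜 (Set.range fun i => Φ (ts i)) = ⊤ :=
    (hΦ ts hmem hinj).span_eq_top_of_card_eq_finrank' (Fintype.card_fin _)
  refine eq_top_mono (Submodule.span_mono ?_) hspan
  exact Set.range_subset_iff.mpr fun i => Set.mem_image_of_mem Φ (hmem i)

theorem chebyshev_convex_body_general {X E : Type*} [TopologicalSpace X] [NormedAddCommGroup E]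
    [NormedSpace ℝ E] [FiniteDimensional ℝ E] {K : Set X} (hK : IsCompact K)
    (hcard : Module.finrank ℝ E ≤ K.encard) {Φ : X → E} (hΦ : ContinuousOn Φ K)
    (hcheb : IsChebyshevSystem ℝ Φ K) :
    IsCompact (convexHull ℝ ({0} ∪ Φ '' K)) ∧ Convex ℝ (convexHull ℝ ({0} ∪ Φ '' K)) ∧
      (interior (convexHull ℝ ({0} ∪ Φ '' K))).Nonempty := by
  rw [Set.singleton_union]
  exact ⟨isCompact_convexHull ℝ ((hK.image_of_continuousOn hΦ).insert 0),
    convex_convexHull ℝ _,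
    interior_convexHull_insert_zero_nonempty_iff.mpr (hcheb.span_image_eq_top hcard)⟩

/-- Chebyshev systems generate convex bodies (Section 7): the convex hull of
`{0} ∪ Φ([a,b])` is a compact convex set with nonempty interior in `ℝ^m`. -/
theorem chebyshev_convex_body
    (m : ℕ) (a b : ℝ) (hab : a < b)
    (Φ : ℝ → EuclideanSpace ℝ (Fin m)) (hΦ : ContinuousOn Φ (Set.Icc a b))
    -- Φ is a Chebyshev system: any m distinct points give linearly independent vectors
    (hcheb : ∀ ts : Fin m → ℝ, (∀ i, ts i ∈ Set.Icc a b) → Function.Injective ts →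
      LinearIndependent ℝ (fun i => Φ (ts i))) :
    IsCompact (convexHull ℝ ({0} ∪ Φ '' Set.Icc a b)) ∧
    Convex ℝ (convexHull ℝ ({0} ∪ Φ '' Set.Icc a b)) ∧
    (interior (convexHull ℝ ({0} ∪ Φ '' Set.Icc a b))).Nonempty :=
  chebyshev_convex_body_general isCompact_Icc ((Set.Icc_infinite hab).encard_eq ▸ le_top) hΦ
    (by rwa [IsChebyshevSystem, finrank_euclideanSpace_fin])
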